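/- For every Schwartz function f : ℝ → ℂ and every x₀ ∈ ℝ, the principal value of ∫ f(x)/(x − x₀) dx exists: the limit as δ → 0⁺ of ( ∫_{x₀+δ}^{∞} f(x)/(x − x₀) dx + ∫_{−∞}^{x₀−δ} f(x)/(x − x₀) dx ) exists in ℂ. -/

import Mathlib

open MeasureTheory Filter

/-!
Substituting `x = x₀ + t` in the right half-line and `x = x₀ - t` in the left one turns the
truncated integral into `∫ t in (δ, ∞), (f (x₀ + t) - f (x₀ - t)) / t`. The symmetric difference
quotient is integrable on `(0, ∞)`: a Schwartz function is Lipschitz (its derivative is bounded),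
so the quotient is bounded on `(0, 1]`, and on `(1, ∞)` it is dominated by
`‖f (x₀ + t)‖ + ‖f (x₀ - t)‖`. Hence the truncations converge to its integral over `(0, ∞)`.
-/

/-- A Schwartz function is globally Lipschitz, since its derivative is again Schwartz and therefore
bounded. -/
lemma schwartz_lipschitz (f : SchwartzMap ℝ ℂ) :
    ∃ C : ℝ, ∀ x y : ℝ, ‖f x - f y‖ ≤ C * ‖x - y‖ := by
  refine ⟨SchwartzMap.seminorm ℝ 0 0 (SchwartzMap.derivCLM ℝ ℂ f), fun x y => ?_⟩
  refine Convex.norm_image_sub_le_of_norm_deriv_le (𝕜 := ℝ) (s := Set.univ)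
    (fun z _ => f.differentiableAt) (fun z _ => ?_) convex_univ trivial trivial
  have h := SchwartzMap.norm_le_seminorm ℝ (SchwartzMap.derivCLM ℝ ℂ f) z
  rwa [SchwartzMap.derivCLM_apply] at h

/-- Away from the origin the kernel `1 / t` is bounded, so it does not affect integrability. -/
lemma integrableOn_div_Ioi {g : ℝ → ℂ} (hg : Integrable g) {δ : ℝ} (hδ : 0 < δ) :
    IntegrableOn (fun t : ℝ => g t / (t : ℂ)) (Set.Ioi δ) := by
  refine Integrable.mono' (hg.norm.const_mul δ⁻¹).integrableOn
    (hg.aemeasurable.div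
      Complex.measurable_ofReal.aemeasurable).aestronglyMeasurable.restrict ?_
  refine (ae_restrict_iff' measurableSet_Ioi).2 (Eventually.of_forall fun t ht => ?_)
  have ht' : δ < t := ht
  rw [norm_div, Complex.norm_real, Real.norm_of_nonneg (hδ.trans ht').le, div_eq_inv_mul]
  gcongr

/-- The symmetric difference quotient of a Schwartz function is integrable on the whole half-line:
the singularity at `0` is removed by the cancellation in the numerator. -/
lemma integrableOn_symm_quotient (f : SchwartzMap ℝ ℂ) (x₀ : ℝ) :
    IntegrableOn (fun t : ℝ => (f (x₀ + t) - f (x₀ - t)) / (t : ℂ)) (Set.Ioi 0) := by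
  have hg : Integrable (fun t : ℝ => f (x₀ + t) - f (x₀ - t)) :=
    (f.integrable.comp_add_left x₀).sub (f.integrable.comp_sub_left x₀)
  rw [← Set.Ioc_union_Ioi_eq_Ioi (zero_le_one (α := ℝ))]
  refine IntegrableOn.union ?_ (integrableOn_div_Ioi hg one_pos)
  obtain ⟨C, hC⟩ := schwartz_lipschitz f
  refine Measure.integrableOn_of_bounded (M := C * 2) measure_Ioc_lt_top.ne
    (hg.aemeasurable.div Complex.measurable_ofReal.aemeasurable).aestronglyMeasurable ?_
  refine (ae_restrict_iff' measurableSet_Ioc).2 (Eventually.of_forall fun t ht => ?_)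
  have h := hC (x₀ + t) (x₀ - t)
  rw [show x₀ + t - (x₀ - t) = 2 * t by ring, Real.norm_of_nonneg (by linarith [ht.1])] at h
  rw [norm_div, Complex.norm_real, Real.norm_of_nonneg ht.1.le, div_le_iff₀ ht.1]
  linarith

/-- Translation and reflection fold the two truncated integrals into a single one. -/
lemma truncation_eq (f : SchwartzMap ℝ ℂ) (x₀ : ℝ) {δ : ℝ} (hδ : 0 < δ) :
    (∫ x in Set.Ioi (x₀ + δ), f x / ((x : ℂ) - (x₀ : ℂ))) +
        ∫ x in Set.Iio (x₀ - δ), f x / ((x : ℂ) - (x₀ : ℂ)) =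
      ∫ t in Set.Ioi δ, (f (x₀ + t) - f (x₀ - t)) / (t : ℂ) := by
  have h1 := (measurePreserving_add_left volume x₀).setIntegral_preimage_emb
    (measurableEmbedding_addLeft x₀)
    (fun x : ℝ => f x / ((x : ℂ) - (x₀ : ℂ))) (Set.Ioi (x₀ + δ))
  have h2 := (Measure.measurePreserving_sub_left volume x₀).setIntegral_preimage_emb
    (MeasurableEquiv.subLeft x₀).measurableEmbedding
    (fun x : ℝ => f x / ((x : ℂ) - (x₀ : ℂ))) (Set.Iio (x₀ - δ))
  rw [show (fun t => x₀ + t) ⁻¹' Set.Ioi (x₀ + δ) = Set.Ioi δ by ext; simp] at h1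
  rw [show (fun t => x₀ - t) ⁻¹' Set.Iio (x₀ - δ) = Set.Ioi δ by ext; simp] at h2
  rw [← h1, ← h2]
  simp only [Complex.ofReal_add, Complex.ofReal_sub, add_sub_cancel_left, sub_sub_cancel_left,
    div_neg, integral_neg, ← sub_eq_add_neg, sub_div]
  exact (integral_sub (integrableOn_div_Ioi (f.integrable.comp_add_left x₀) hδ)
    (integrableOn_div_Ioi (f.integrable.comp_sub_left x₀) hδ)).symm

/-- For every Schwartz function `f : ℝ → ℂ` and every `x₀ ∈ ℝ`, the principal value of
`∫ f(x)/(x − x₀) dx` exists: the symmetric truncations converge as `δ → 0⁺`. -/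
theorem principal_value_exists (f : SchwartzMap ℝ ℂ) (x₀ : ℝ) :
    ∃ L : ℂ,
      Tendsto
        (fun δ : ℝ =>
          (∫ x in Set.Ioi (x₀ + δ), f x / ((x : ℂ) - (x₀ : ℂ))) +
          ∫ x in Set.Iio (x₀ - δ), f x / ((x : ℂ) - (x₀ : ℂ)))
        (nhdsWithin 0 (Set.Ioi 0)) (nhds L) := by
  refine ⟨∫ t in Set.Ioi (0 : ℝ), (f (x₀ + t) - f (x₀ - t)) / (t : ℂ), ?_⟩
  have hcover : AECover (volume.restrict (Set.Ioi (0 : ℝ))) (nhdsWithin 0 (Set.Ioi 0))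
      (fun δ : ℝ => Set.Ioi δ) :=
    aecover_Ioi_of_Ioi (tendsto_id.mono_left nhdsWithin_le_nhds)
  refine (hcover.integral_tendsto_of_countably_generated
    (integrableOn_symm_quotient f x₀)).congr' ?_
  filter_upwards [self_mem_nhdsWithin] with δ hδ
  rw [truncation_eq f x₀ hδ, Measure.restrict_restrict measurableSet_Ioi,
    Set.inter_eq_left.2 (Set.Ioi_subset_Ioi (le_of_lt hδ))]
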